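/- Let x₁,…,xₙ ∈ {1,…,N} be distinct points with 2 ≤ n ≤ p, and suppose P({x₂,…,xₙ} ⊆ φᶜ) > 0. Let K = Zᵀ Z be the N × N kernel matrix with entries K_{ab} = ⟨z_a, z_b⟩, where z_a ∈ ℝᵖ is the a-th column of Z. For each subset T = {i₁ < … < i_k} of {x₂,…,x_{n−1}} let D(T) be the determinant of the (k + 1) × (k + 1) matrix whose rows are indexed by (x₁, i₁,…,i_k), whose columns are indexed by (xₙ, i₁,…,i_k), and whose (a, b)-entry is K_{ab} (so D(∅) = K_{x₁ xₙ}, and D(T) = ⟨z_{x₁} ∧ z_{i₁} ∧ … ∧ z_{i_k}, z_{xₙ} ∧ z_{i₁} ∧ … ∧ z_{i_k}⟩). Then (Σ_{T ⊆ {x₂,…,x_{n−1}}} (−1)^{|T|} D(T))² = P({x₂,…,xₙ} ⊆ φᶜ) · P({x₂,…,x_{n−1}} ⊆ φᶜ) · ( P(x₁ ∈ φ and {x₂,…,xₙ} ⊆ φᶜ) / P({x₂,…,xₙ} ⊆ φᶜ) − P(x₁ ∈ φ and {x₂,…,x_{n−1}} ⊆ φᶜ) / P({x₂,…,x_{n−1}}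 ⊆ φᶜ) ). -/

import Mathlib

open Matrix

/-- Squared determinant of the submatrix of `Z` formed by the columns indexed by `S`,
when `S` has exactly `q` elements; `0` otherwise. -/
noncomputable def detSq {q N : ℕ} (Z : Matrix (Fin q) (Fin N) ℝ) (S : Finset (Fin N)) : ℝ :=
  if h : S.card = q then
    (Matrix.det (Matrix.of fun i j : Fin q => Z i ((S.orderIsoOfFin h j : Fin N)))) ^ 2
  else 0

open scoped Classical in
/-- `prDP Z E` is the probability that the determinantal process associated to the
matrix `Z` (with orthonormal rows) belongs to the family `E` of subsets of `{1,…,N}`: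
`P(φ(Z) ∈ E) = Σ_{|S| = q, S ∈ E} det(Z_S)²`. -/
noncomputable def prDP {q N : ℕ} (Z : Matrix (Fin q) (Fin N) ℝ)
    (E : Set (Finset (Fin N))) : ℝ :=
  ∑ S : Finset (Fin N), if S ∈ E then detSq Z S else 0

/-!
Let `K = Zᵀ Z` and `L = 1 - K`. By Cauchy–Binet and Sylvester's `det (1 - X Y) = det (1 - Y X)`,
the hole probability `P(φ ∩ J = ∅)` is the principal minor of `L` on `J`, and expanding
`det (1 - K)` row by row shows that `∑ T ⊆ A, (-1)^|T| D(T)` is minus the minor of `L` with rows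
`u, A` and columns `v, A`, where `u = x₁`, `v = xₙ` and `A = {x₂, …, xₙ₋₁}`. The identity is then
the Desnanot–Jacobi relation between this minor and the principal minors of `L` on `A`,
`A ∪ {u}`, `A ∪ {v}` and `A ∪ {u, v}`.
-/

section Minors

variable {n R : Type*} [CommRing R] [DecidableEq n]

/-- The principal minor of `M` with rows and columns in `S`. -/
def principalMinor (M : Matrix n n R) (S : Finset n) : R :=
  (M.submatrix (↑) (↑) : Matrix S S R).det

/-- The minor of `M` with rows `u, S` and columns `v, S`; for `M = K` this is the `D(S)` of the
paper. The index type `Option S` puts `u` and `v` at the same position `none`, which fixes the sign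
without any order on `n`. -/
def borderedMinor (M : Matrix n n R) (S : Finset n) (u v : n) : R :=
  (Matrix.of fun a b : Option S => M (a.elim u (↑)) (b.elim v (↑))).det

/-- The Schur complement of the block of `M` indexed by `S`. It is encoded as a matrix on the whole
index type, so that no complement of `S` has to be named. If the block is singular, its `⁻¹` is `0`
and this is just `M`. -/
noncomputable def schurComplement (M : Matrix n n R) (S : Finset n) : Matrix n n R :=
  M - (M.submatrix id (↑) : Matrix n S R) * (M.submatrix (↑) (↑) : Matrix S S R)⁻¹ *
    (M.submatrix (↑) id : Matrix S n R)

lemma principalMinor_image_univ {k : Type*} [Fintype k] [DecidableEq k] (M : Matrix n n R)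
    {f : k → n} (hf : Function.Injective f) :
    principalMinor M (Finset.univ.image f) = (M.submatrix f f).det := by
  let e : k ≃ Finset.univ.image f :=
    Equiv.ofBijective (fun i => ⟨f i, Finset.mem_image_of_mem f (Finset.mem_univ i)⟩)
      ⟨fun i j h => hf (congrArg Subtype.val h), fun ⟨a, ha⟩ => by simpa using ha⟩
  exact (det_submatrix_equiv_self e _).symm

lemma principalMinor_eq_det_piecewise [Fintype n] (M : Matrix n n R) (S : Finset n) :
    principalMinor M S = detRowAlternating (S.piecewise M.row (1 : Matrix n n R).row) :=
  (det_piecewise_one_eq_submatrix_det M S).symm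

lemma principalMinor_insert_eq_det_piecewise [Fintype n] (M : Matrix n n R) {S : Finset n} {u : n}
    (hu : u ∉ S) :
    principalMinor M (insert u S) = detRowAlternating
      (S.piecewise M.row (Function.update (1 : Matrix n n R).row u (M.row u))) := by
  rw [principalMinor_eq_det_piecewise, Finset.piecewise_insert]
  exact congrArg detRowAlternating (S.update_piecewise_of_notMem _ _ hu _)

lemma borderedMinor_eq_principalMinor (M : Matrix n n R) {S : Finset n} {u : n} (hu : u ∉ S)
    (v : n) :
    borderedMinor M S u v =
      principalMinor (M.submatrix id (Function.update id u v)) (insert u S) := by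
  rw [principalMinor, ← det_submatrix_equiv_self (Finset.subtypeInsertEquivOption hu).symm]
  refine congrArg det (Matrix.ext fun a b => ?_)
  have hne (i : S) : (i : n) ≠ u := ne_of_mem_of_not_mem i.2 hu
  rcases a with _ | a <;> rcases b with _ | b <;>
    simp [Finset.subtypeInsertEquivOption, hne]

lemma principalMinor_insert (M : Matrix n n R) {S : Finset n} {u : n} (hu : u ∉ S) :
    principalMinor M (insert u S) = borderedMinor M S u u := by
  have hid : Function.update id u u = id := Function.update_eq_self u id
  rw [borderedMinor_eq_principalMinor M hu, hid, submatrix_id_id]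

lemma borderedMinor_transpose (M : Matrix n n R) (S : Finset n) (u v : n) :
    borderedMinor Mᵀ S u v = borderedMinor M S v u :=
  det_transpose _

lemma borderedMinor_neg (M : Matrix n n R) (S : Finset n) (u v : n) :
    borderedMinor (-M) S u v = -((-1) ^ S.card * borderedMinor M S u v) := by
  have h := det_neg (Matrix.of fun a b : Option S => M (a.elim u (↑)) (b.elim v (↑)))
  rw [Fintype.card_option, Fintype.card_coe, pow_succ'] at h
  rw [borderedMinor, borderedMinor, ← neg_one_mul, ← mul_assoc, ← h]
  rfl

lemma principalMinor_insert_eq_sum_powerset [Finite n] {M M' : Matrix n n R} {S : Finset n} {u : n}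
    (hu : u ∉ S) (row_u : M'.row u = M.row u)
    (row_mem : ∀ a ∈ S, M'.row a = M.row a + (1 : Matrix n n R).row a) :
    principalMinor M' (insert u S) = ∑ T ∈ S.powerset, principalMinor M (insert u T) := by
  cases nonempty_fintype n
  set base : n → n → R := Function.update (1 : Matrix n n R).row u (M.row u) with hbase
  have hsplit : S.piecewise M'.row base = S.piecewise (M.row + base) base := by
    refine S.piecewise_congr (fun a ha => ?_) fun _ _ => rfl
    have base_mem : base a = (1 : Matrix n n R).row a :=
      Function.update_of_ne (ne_of_mem_of_not_mem ha hu) _ _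
    rw [row_mem a ha, Pi.add_apply, base_mem]
  calc principalMinor M' (insert u S)
      = detRowAlternating (S.piecewise (M.row + base) base) := by
        rw [principalMinor_insert_eq_det_piecewise _ hu, row_u, ← hbase, hsplit]
    _ = ∑ T ∈ S.powerset, detRowAlternating (T.piecewise M.row base) :=
        detRowAlternating.toMultilinearMap.map_piecewise_add _ _ S
    _ = ∑ T ∈ S.powerset, principalMinor M (insert u T) :=
        Finset.sum_congr rfl fun T hT =>
          (principalMinor_insert_eq_det_piecewise M fun h => hu (Finset.mem_powerset.mp hT h)).symm

lemma borderedMinor_one_add [Finite n] (M : Matrix n n R) {S : Finset n} {u v : n} (hu : u ∉ S)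
    (hv : v ∉ S) (huv : u ≠ v) :
    borderedMinor (1 + M) S u v = ∑ T ∈ S.powerset, borderedMinor M T u v := by
  let σ := Function.update id u v
  -- The diagonal position of row `u` carries column `v`, so this row has no identity part.
  have row_u : ((1 + M).submatrix id σ).row u = (M.submatrix id σ).row u := by
    ext b
    rcases eq_or_ne b u with rfl | hb
    · simp [σ, huv]
    · simp [σ, hb, hb.symm]
  have row_mem (a : n) (ha : a ∈ S) :
      ((1 + M).submatrix id σ).row a = (M.submatrix id σ).row a + (1 : Matrix n n R).row a := by
    ext b
    rcases eq_or_ne b u with rfl | hb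
    · simp [σ, ne_of_mem_of_not_mem ha hu, ne_of_mem_of_not_mem ha hv]
    · simp [σ, hb, add_comm]
  rw [borderedMinor_eq_principalMinor _ hu, principalMinor_insert_eq_sum_powerset hu row_u row_mem]
  exact Finset.sum_congr rfl fun T hT =>
    (borderedMinor_eq_principalMinor M (fun h => hu (Finset.mem_powerset.mp hT h)) v).symm

lemma sum_neg_one_pow_mul_borderedMinor [Finite n] (M : Matrix n n R) {S : Finset n} {u v : n}
    (hu : u ∉ S) (hv : v ∉ S) (huv : u ≠ v) :
    ∑ T ∈ S.powerset, (-1) ^ T.card * borderedMinor M T u v = -borderedMinor (1 - M) S u v := by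
  rw [sub_eq_add_neg, borderedMinor_one_add _ hu hv huv, ← Finset.sum_neg_distrib]
  simp only [borderedMinor_neg, neg_neg]

lemma det_submatrix_sumElim {k : Type*} [Fintype k] [DecidableEq k] (M : Matrix n n R)
    {S : Finset n} (hS : IsUnit (principalMinor M S)) (r c : k → n) :
    (M.submatrix (Sum.elim ((↑) : S → n) r) (Sum.elim (↑) c)).det =
      principalMinor M S * ((schurComplement M S).submatrix r c).det := by
  have := invertibleOfIsUnitDet (M.submatrix Subtype.val Subtype.val) hS
  have hblocks : M.submatrix (Sum.elim ((↑) : S → n) r) (Sum.elim ((↑) : S → n) c) =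
      fromBlocks (M.submatrix Subtype.val Subtype.val) (M.submatrix Subtype.val c)
        (M.submatrix r Subtype.val) (M.submatrix r c) := by
    ext (i | i) (j | j) <;> rfl
  rw [hblocks, det_fromBlocks₁₁, invOf_eq_nonsing_inv]
  rfl

lemma borderedMinor_eq_mul_schurComplement (M : Matrix n n R) {S : Finset n}
    (hS : IsUnit (principalMinor M S)) (u v : n) :
    borderedMinor M S u v = principalMinor M S * schurComplement M S u v := by
  have h := det_submatrix_sumElim M hS (fun _ : Unit => u) (fun _ => v)
  rw [det_unique (n := Unit)] at h
  rw [borderedMinor, ← det_submatrix_equiv_self (Equiv.optionEquivSumPUnit S).symm]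
  refine (congrArg det (Matrix.ext fun a b => ?_)).trans h
  rcases a with a | a <;> rcases b with b | b <;> rfl

lemma desnanot_jacobi_principalMinor (M : Matrix n n R) {S : Finset n}
    (hS : IsUnit (principalMinor M S)) {u v : n} (hu : u ∉ S) (hv : v ∉ S) (huv : u ≠ v) :
    principalMinor M S * principalMinor M (insert u (insert v S)) =
      principalMinor M (insert u S) * principalMinor M (insert v S) -
        borderedMinor M S u v * borderedMinor M S v u := by
  have hinj : Function.Injective (Sum.elim ((↑) : S → n) ![u, v]) := by
    refine Subtype.val_injective.sumElim ?_ fun a i => ?_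
    · intro i j
      fin_cases i <;> fin_cases j <;> simp [huv, huv.symm]
    · fin_cases i
      exacts [ne_of_mem_of_not_mem a.2 hu, ne_of_mem_of_not_mem a.2 hv]
  have himage : Finset.univ.image (Sum.elim ((↑) : S → n) ![u, v]) = insert u (insert v S) := by
    ext a
    simp [Fin.exists_fin_two, or_comm, or_assoc, eq_comm (b := a)]
  rw [← himage, principalMinor_image_univ M hinj, det_submatrix_sumElim M hS, det_fin_two,
    principalMinor_insert M hu, principalMinor_insert M hv]
  simp only [borderedMinor_eq_mul_schurComplement M hS, submatrix_apply, cons_val_zero,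
    cons_val_one]
  ring

open Polynomial in
lemma det_mul_eq_sum_principalMinor {m : Type*} [Fintype m] [DecidableEq m] [Fintype n]
    (A : Matrix m n R) (B : Matrix n m R) :
    (A * B).det =
      ∑ S ∈ Finset.univ.powersetCard (Fintype.card m), principalMinor (B * A) S := by
  have hcoeff := coeff_det_one_add_X_smul_eq_sum_minors (A * B) (Fintype.card m)
  have hcomm : (1 + (X : R[X]) • (A * B).map C).det = (1 + (X : R[X]) • (B * A).map C).det := by
    rw [Matrix.map_mul, Matrix.map_mul, ← Matrix.smul_mul, det_one_add_mul_comm, Matrix.mul_smul]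
  rw [hcomm, coeff_det_one_add_X_smul_eq_sum_minors, ← Finset.card_univ,
    Finset.powersetCard_self, Finset.sum_singleton] at hcoeff
  rw [← det_submatrix_equiv_self (Equiv.subtypeUnivEquiv Finset.mem_univ) (A * B)]
  exact hcoeff.symm

lemma principalMinor_diagonal_mul [Fintype n] (w : n → R) (M : Matrix n n R) (S : Finset n) :
    principalMinor (diagonal w * M) S = (∏ i ∈ S, w i) * principalMinor M S := by
  have h : (diagonal w * M).submatrix ((↑) : S → n) (↑) =
      diagonal (fun i : S => w i) * M.submatrix (↑) (↑) := by
    ext a b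
    simp
  rw [principalMinor, h, det_mul, det_diagonal, Finset.prod_coe_sort S w, principalMinor]

end Minors

section DeterminantalProcess

variable {p N : ℕ} (Z : Matrix (Fin p) (Fin N) ℝ)

lemma detSq_nonneg (S : Finset (Fin N)) : 0 ≤ detSq Z S := by
  unfold detSq
  split_ifs <;> positivity

lemma detSq_eq_principalMinor {S : Finset (Fin N)} (hS : S.card = p) :
    detSq Z S = principalMinor (Zᵀ * Z) S := by
  let W : Matrix (Fin p) (Fin p) ℝ := Matrix.of fun i j => Z i (S.orderIsoOfFin hS j)
  calc detSq Z S = W.det ^ 2 := dif_pos hS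
    _ = (Wᵀ * W).det := by rw [det_mul, det_transpose, sq]
    _ = principalMinor (Zᵀ * Z) S :=
      det_submatrix_equiv_self (S.orderIsoOfFin hS).toEquiv
        ((Zᵀ * Z).submatrix ((↑) : S → Fin N) (↑))

lemma det_mul_diagonal_mul_transpose (w : Fin N → ℝ) :
    (Z * diagonal w * Zᵀ).det = ∑ S : Finset (Fin N), (∏ i ∈ S, w i) * detSq Z S := by
  rw [Matrix.mul_assoc, det_mul_eq_sum_principalMinor, Fintype.card_fin]
  simp only [Matrix.mul_assoc, principalMinor_diagonal_mul]
  refine (Finset.sum_congr rfl fun S hS => ?_).trans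
    (Finset.sum_subset (Finset.subset_univ _) fun S _ hS => ?_)
  · rw [detSq_eq_principalMinor Z (Finset.mem_powersetCard.mp hS).2]
  · have hcard : S.card ≠ p := by simpa [Finset.mem_powersetCard] using hS
    rw [detSq, dif_neg hcard, mul_zero]

lemma prDP_mono {E F : Set (Finset (Fin N))} (h : E ⊆ F) : prDP Z E ≤ prDP Z F := by
  refine Finset.sum_le_sum fun S _ => ?_
  split_ifs with hE hF hF
  exacts [le_rfl, absurd (h hE) hF, detSq_nonneg Z S, le_rfl]

lemma prDP_mem_and_disjoint (u : Fin N) (J : Finset (Fin N)) :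
    prDP Z {S | u ∈ S ∧ Disjoint S J} =
      prDP Z {S | Disjoint S J} - prDP Z {S | Disjoint S (insert u J)} := by
  simp only [prDP, ← Finset.sum_sub_distrib, Set.mem_ofPred_eq, Finset.disjoint_insert_right]
  refine Finset.sum_congr rfl fun S _ => ?_
  by_cases hu : u ∈ S <;> by_cases hJ : Disjoint S J <;> simp [hu, hJ]

variable {Z}

lemma prDP_disjoint (hZ : Z * Zᵀ = 1) (J : Finset (Fin N)) :
    prDP Z {S | Disjoint S J} = principalMinor (1 - Zᵀ * Z) J := by
  let w : Fin N → ℝ := fun i => if i ∉ J then 1 else 0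
  let Y : Matrix (Fin p) J ℝ := Z.submatrix id (↑)
  have hY : Z * diagonal w * Zᵀ = 1 - Y * Yᵀ := by
    rw [eq_sub_iff_add_eq, ← hZ]
    ext a b
    change ∑ i, (Z * diagonal w) a i * Z b i + ∑ j : J, Z a j * Z b j = ∑ i, Z a i * Z b i
    rw [Finset.sum_coe_sort J fun i => Z a i * Z b i, ← Fintype.sum_ite_mem J,
      ← Finset.sum_add_distrib]
    refine Finset.sum_congr rfl fun i _ => ?_
    by_cases hi : i ∈ J <;> simp [w, hi]
  have hL : (1 - Zᵀ * Z).submatrix ((↑) : J → Fin N) (↑) = 1 - Yᵀ * Y :=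
    congrArg (· - Yᵀ * Y) (submatrix_one _ Subtype.val_injective)
  rw [principalMinor, hL, ← det_one_sub_mul_comm, ← hY, det_mul_diagonal_mul_transpose]
  refine Finset.sum_congr rfl fun S _ => ?_
  simp only [w, Finset.prod_boole, ite_mul, one_mul, zero_mul, Set.mem_ofPred_eq,
    Finset.disjoint_left]

end DeterminantalProcess

lemma forall_notMem_iff_disjoint_image {ι α : Type*} [Fintype ι] [DecidableEq α] (x : ι → α)
    (P : ι → Prop) [DecidablePred P] (S : Finset α) :
    (∀ i, P i → x i ∉ S) ↔ Disjoint S (Finset.image x (Finset.univ.filter P)) := by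
  simp [Finset.disjoint_right]

lemma insert_image_filter_ne_and_ne {ι α : Type*} [Fintype ι] [DecidableEq ι] [DecidableEq α]
    (x : ι → α) {i j : ι} (hij : i ≠ j) :
    insert (x j) (Finset.image x (Finset.univ.filter fun k => k ≠ i ∧ k ≠ j)) =
      Finset.image x (Finset.univ.filter fun k => k ≠ i) := by
  rw [← Finset.image_insert]
  congr 1
  ext k
  by_cases hk : k = j <;> simp [hk, hij.symm]

theorem proposition_two_general {p N : ℕ} {Z : Matrix (Fin p) (Fin N) ℝ} (hZ : Z * Zᵀ = 1)
    {A : Finset (Fin N)} {u v : Fin N} (hu : u ∉ A) (hv : v ∉ A) (huv : u ≠ v)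
    (hpos : 0 < prDP Z {S | Disjoint S (insert v A)}) :
    (∑ T ∈ A.powerset, (-1) ^ T.card * borderedMinor (Zᵀ * Z) T u v) ^ 2 =
      prDP Z {S | Disjoint S (insert v A)} * prDP Z {S | Disjoint S A} *
        (prDP Z {S | u ∈ S ∧ Disjoint S (insert v A)} / prDP Z {S | Disjoint S (insert v A)} -
          prDP Z {S | u ∈ S ∧ Disjoint S A} / prDP Z {S | Disjoint S A}) := by
  have hposA : 0 < prDP Z {S | Disjoint S A} :=
    hpos.trans_le <| prDP_mono Z fun S hS => (Finset.disjoint_insert_right.mp hS).2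
  have hsymm : borderedMinor (1 - Zᵀ * Z) A v u = borderedMinor (1 - Zᵀ * Z) A u v := by
    rw [← borderedMinor_transpose]
    simp
  have jacobi := desnanot_jacobi_principalMinor (1 - Zᵀ * Z)
    (prDP_disjoint hZ A ▸ hposA.ne'.isUnit) hu hv huv
  rw [hsymm] at jacobi
  simp only [← prDP_disjoint hZ] at jacobi
  rw [sum_neg_one_pow_mul_borderedMinor _ hu hv huv, prDP_mem_and_disjoint, prDP_mem_and_disjoint]
  field_simp
  linear_combination jacobi

/-- Proposition 2: with K = Zᵀ Z the kernel, x₁,…,xₙ distinct (2 ≤ n ≤ p),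
index 0 playing the role of subscript 1 and index n−1 that of subscript n, and
D(T) = ⟨z_{x₁} ∧ ⋀_{t ∈ T} z_t, z_{xₙ} ∧ ⋀_{t ∈ T} z_t⟩ for T ⊆ {x₂,…,x_{n−1}},
(Σ_{T ⊆ {x₂,…,x_{n−1}}} (−1)^{|T|} D(T))²
  = P({x₂,…,xₙ} ⊆ φᶜ) · P({x₂,…,x_{n−1}} ⊆ φᶜ)
    · ( P(x₁ ∈ φ | {x₂,…,xₙ} ⊆ φᶜ) − P(x₁ ∈ φ | {x₂,…,x_{n−1}} ⊆ φᶜ) ). -/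
theorem proposition_two {N p n : ℕ} (hp : 1 < p) (hpN : p < N)
    (Z : Matrix (Fin p) (Fin N) ℝ) (hZ : Z * Zᵀ = 1)
    (hn : 2 ≤ n) (hnp : n ≤ p)
    (x : Fin n → Fin N) (hx : Function.Injective x)
    (i0 ilast : Fin n) (hi0 : (i0 : ℕ) = 0) (hilast : (ilast : ℕ) = n - 1)
    (hpos : 0 < prDP Z {S | ∀ i : Fin n, i ≠ i0 → x i ∉ S}) :
    (∑ T ∈ (Finset.image x
          (Finset.univ.filter fun i : Fin n => i ≠ i0 ∧ i ≠ ilast)).powerset,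
        (-1 : ℝ) ^ T.card *
          (Matrix.of fun a b : Option T =>
            (Zᵀ * Z) (a.elim (x i0) (fun t => (t : Fin N)))
                     (b.elim (x ilast) (fun t => (t : Fin N)))).det) ^ 2
      = prDP Z {S | ∀ i : Fin n, i ≠ i0 → x i ∉ S}
          * prDP Z {S | ∀ i : Fin n, i ≠ i0 → i ≠ ilast → x i ∉ S}
          * (prDP Z {S | x i0 ∈ S ∧ ∀ i : Fin n, i ≠ i0 → x i ∉ S}
                / prDP Z {S | ∀ i : Fin n, i ≠ i0 → x i ∉ S}
              - prDP Z {S | x i0 ∈ S ∧ ∀ i : Fin n, i ≠ i0 → i ≠ ilast → x i ∉ S}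
                / prDP Z {S | ∀ i : Fin n, i ≠ i0 → i ≠ ilast → x i ∉ S}) := by
  have hne : i0 ≠ ilast := Fin.ne_of_val_ne (by lia)
  have h := proposition_two_general hZ (u := x i0) (v := x ilast)
    (A := Finset.image x (Finset.univ.filter fun i => i ≠ i0 ∧ i ≠ ilast))
    (by simp [hx.eq_iff]) (by simp [hx.eq_iff]) (hx.ne hne)
  simp only [insert_image_filter_ne_and_ne x hne, ← forall_notMem_iff_disjoint_image, and_imp] at h
  exact h hpos
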